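/- arXiv:0805.3754 — 3 statements merged into one kernel-verified Lean document; each statement's English description precedes it below -/
import Mathlib

section
/- Define the normalized Whittaker function Ψ̃^{(n+1)}_z(p) := (∏_{i=1}^{n}(p_i − p_{i+1})_q!) · Ψ^{(n+1)}_z(p). Then for every dominant p = (p_1,…,p_{ℓ+1}) ∈ ℤ^{ℓ+1}: Ψ̃^{(ℓ+1)}_{z_1,…,z_{ℓ+1}}(p) = Σ over s = (s_1,…,s_ℓ) ∈ ℤ^ℓ with p_i ≥ s_i ≥ p_{i+1} (1 ≤ i ≤ ℓ) of z_{ℓ+1}^{(Σ_{i=1}^{ℓ+1} p_i) − (Σ_{i=1}^{ℓ} s_i)} · (∏_{k=1}^{ℓ} C_q(p_k − p_{k+1}, s_k − p_{k+1})) · Ψ̃^{(ℓ)}_{z_1,…,z_ℓ}(s), where C_q(n, m) = (n)_q! / ((m)_q! (n−m)_q!) is the q-binomial coefficient. -/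
/-!
The weight of a Gelfand–Zetlin pattern is a product over its consecutive pairs of rows. Deleting the
top row `p` therefore splits the sum defining `Ψ_z(p)` according to the second row `s`, which ranges
over the vectors interlacing `p`:
`Ψ_z(p) = ∑ₛ z_{ℓ+1}^{|p| - |s|} Q(p, s) Δ(s) Ψ_z(s)`,
where `Δ(s) = ∏ᵢ (sᵢ - sᵢ₊₁)_q!` and `Q(p, s) = ∏ᵢ 1 / ((pᵢ - sᵢ)_q! (sᵢ - pᵢ₊₁)_q!)`.
Here `Δ(s) Ψ_z(s)` is the normalized function of lower rank, and multiplying by `Δ(p)` turns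
`Q(p, s)` into the product of `q`-binomial coefficients.
-/

open Finset

/-- The `q`-factorial `(n)_q! = ∏_{m=1}^{n} (1 - q^m)` (equal to `1` for `n ≤ 0`). -/
noncomputable def qfac {K : Type*} [Field K] (q : K) (n : ℤ) : K :=
  ∏ m ∈ Finset.range n.toNat, (1 - q ^ (m + 1))

/-- A Gelfand–Zetlin pattern: a triangular array `g k i = p_{k+1,i+1}` (0-indexed),
satisfying the interlacing conditions `p_{k+1,i} ≥ p_{k,i} ≥ p_{k+1,i+1}`. -/
def IsGZ {n : ℕ} (g : ∀ k : Fin (n + 1), Fin ((k : ℕ) + 1) → ℤ) : Prop :=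
  ∀ (k : Fin n) (i : Fin ((k : ℕ) + 1)),
    g k.castSucc i ≤ g k.succ i.castSucc ∧ g k.succ i.succ ≤ g k.castSucc i

/-- The weight of a Gelfand–Zetlin pattern in the explicit formula for the
`q`-deformed `gl_{n+1}`-Whittaker function. -/
noncomputable def gzWeight {K : Type*} [Field K] (q : K) {n : ℕ} (z : Fin (n + 1) → K)
    (g : ∀ k : Fin (n + 1), Fin ((k : ℕ) + 1) → ℤ) : K :=
  z ⟨0, n.succ_pos⟩ ^ g ⟨0, n.succ_pos⟩ ⟨0, Nat.one_pos⟩ *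
  (∏ k : Fin n, z k.succ ^ ((∑ i, g k.succ i) - ∑ i, g k.castSucc i)) *
  (∏ k : Fin n, ∏ i : Fin (k : ℕ), qfac q (g k.castSucc i.castSucc - g k.castSucc i.succ)) *
  (∏ k : Fin n, ∏ i : Fin ((k : ℕ) + 1),
      (qfac q (g k.succ i.castSucc - g k.castSucc i) *
       qfac q (g k.castSucc i - g k.succ i.succ)))⁻¹

/-- The `q`-deformed `gl_{n+1}`-Whittaker function `Ψ_z(p)`: the sum over all
Gelfand–Zetlin patterns with top row `p` of their weights, if `p` is dominant,
and `0` otherwise. -/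
noncomputable def whit {K : Type*} [Field K] (q : K) (n : ℕ) (z : Fin (n + 1) → K)
    (p : Fin (n + 1) → ℤ) : K := by
  classical
  exact if (∀ k : Fin n, p k.succ ≤ p k.castSucc) then
    ∑ g ∈ (Finset.Icc (fun (k : Fin (n + 1)) (_ : Fin ((k : ℕ) + 1)) => p (Fin.last n))
        (fun (k : Fin (n + 1)) (_ : Fin ((k : ℕ) + 1)) => p ⟨0, n.succ_pos⟩)).filter
        (fun g => IsGZ g ∧ g (Fin.last n) = p),
      gzWeight q z g
  else 0

/-- The normalized `q`-deformed Whittaker function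
`Ψ̃_z(p) = (∏_{i=1}^{n} (p_i - p_{i+1})_q!) ⬝ Ψ_z(p)`. -/
noncomputable def nwhit {K : Type*} [Field K] (q : K) (n : ℕ) (z : Fin (n + 1) → K)
    (p : Fin (n + 1) → ℤ) : K :=
  (∏ i : Fin n, qfac q (p i.castSucc - p i.succ)) * whit q n z p

/-- The `q`-binomial coefficient `C_q(n,m) = (n)_q! / ((m)_q! (n-m)_q!)`. -/
noncomputable def qbinom {K : Type*} [Field K] (q : K) (n m : ℤ) : K :=
  qfac q n / (qfac q m * qfac q (n - m))

/-- Triangular integer arrays with rows of lengths `1, …, n + 1`, the ambient type of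
Gelfand–Zetlin patterns; as in `IsGZ`, row `k` has length `k + 1`. -/
abbrev TriangularArray (n : ℕ) : Type :=
  ∀ k : Fin (n + 1), Fin ((k : ℕ) + 1) → ℤ

namespace TriangularArray

variable {n : ℕ}

/-- The array obtained from `g` by adding `p` as a new longest row. -/
def snocRow (g : TriangularArray n) (p : Fin (n + 2) → ℤ) : TriangularArray (n + 1) :=
  Fin.snoc (α := fun k : Fin (n + 2) => Fin ((k : ℕ) + 1) → ℤ) g p

/-- The array obtained from `g` by deleting its longest row. -/
def initRows (g : TriangularArray (n + 1)) : TriangularArray n :=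
  fun k => g k.castSucc

theorem snocRow_last (g : TriangularArray n) (p : Fin (n + 2) → ℤ) :
    g.snocRow p (Fin.last (n + 1)) = p :=
  Fin.snoc_last _ _

theorem snocRow_castSucc (g : TriangularArray n) (p : Fin (n + 2) → ℤ) (k : Fin (n + 1)) :
    g.snocRow p k.castSucc = g k :=
  Fin.snoc_castSucc _ _ _

theorem initRows_snocRow (g : TriangularArray n) (p : Fin (n + 2) → ℤ) :
    (g.snocRow p).initRows = g :=
  funext (snocRow_castSucc g p)

theorem snocRow_initRows (g : TriangularArray (n + 1)) :
    g.initRows.snocRow (g (Fin.last (n + 1))) = g :=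
  Fin.snoc_init_self g

end TriangularArray

open TriangularArray

section Patterns

variable {n : ℕ}

theorem IsGZ.antitone {g : TriangularArray n} (hg : IsGZ g) (k : Fin (n + 1)) :
    Antitone (g k) := by
  cases k using Fin.cases with
  | zero => exact Subsingleton.antitone (α := Fin 1) _
  | succ k => exact Fin.antitone_iff_succ_le.2 fun i => (hg k i).2.trans (hg k i).1

theorem IsGZ.mem_Icc {g : TriangularArray n} (hg : IsGZ g) :
    g ∈ Set.Icc (fun _ _ => g (Fin.last n) (Fin.last n)) (fun _ _ => g (Fin.last n) 0) := by
  suffices h : ∀ k i, g (Fin.last n) (Fin.last n) ≤ g k i ∧ g k i ≤ g (Fin.last n) 0 from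
    ⟨fun k i => (h k i).1, fun k i => (h k i).2⟩
  intro k
  induction k using Fin.reverseInduction with
  | last => exact fun i => ⟨hg.antitone _ (Fin.le_last i), hg.antitone _ (Fin.zero_le i)⟩
  | cast k ih =>
    exact fun i => ⟨(ih i.succ).1.trans (hg k i).2, (hg k i).1.trans (ih i.castSucc).2⟩

theorem isGZ_iff_initRows {g : TriangularArray (n + 1)} :
    IsGZ g ↔ IsGZ g.initRows ∧ g.initRows (Fin.last n) ∈
      Icc (fun i => g (Fin.last (n + 1)) i.succ) (fun i => g (Fin.last (n + 1)) i.castSucc) := by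
  rw [Finset.mem_Icc]
  refine ⟨fun h => ⟨fun k => h k.castSucc, fun i => (h (Fin.last n) i).2,
    fun i => (h (Fin.last n) i).1⟩, ?_⟩
  rintro ⟨hinit, hlower, hupper⟩ k
  cases k using Fin.lastCases with
  | last => exact fun i => ⟨hupper i, hlower i⟩
  | cast k => exact hinit k

theorem finite_setOf_isGZ_and_last_eq (p : Fin (n + 1) → ℤ) :
    {g : TriangularArray n | IsGZ g ∧ g (Fin.last n) = p}.Finite := by
  refine (Set.finite_Icc (fun _ _ => p (Fin.last n)) (fun _ _ => p 0)).subset ?_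
  rintro g ⟨hg, rfl⟩
  exact hg.mem_Icc

/-- The finite set of Gelfand–Zetlin patterns over `p`; it is empty unless `p` is dominant. -/
noncomputable def gzPatterns (p : Fin (n + 1) → ℤ) : Finset (TriangularArray n) :=
  (finite_setOf_isGZ_and_last_eq p).toFinset

theorem mem_gzPatterns {p : Fin (n + 1) → ℤ} {g : TriangularArray n} :
    g ∈ gzPatterns p ↔ IsGZ g ∧ g (Fin.last n) = p :=
  Set.Finite.mem_toFinset _

theorem sum_gzPatterns_succ {M : Type*} [AddCommMonoid M] (p : Fin (n + 2) → ℤ)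
    (f : TriangularArray (n + 1) → M) :
    ∑ g ∈ gzPatterns p, f g =
      ∑ s ∈ Icc (fun i : Fin (n + 1) => p i.succ) (fun i => p i.castSucc),
        ∑ g ∈ gzPatterns s, f (g.snocRow p) := by
  rw [Finset.sum_sigma']
  refine Finset.sum_bij' (fun g _ => ⟨g.initRows (Fin.last n), g.initRows⟩)
    (fun x _ => x.2.snocRow p) ?_ ?_ ?_ ?_ ?_
  · intro g hg
    obtain ⟨hgz, rfl⟩ := mem_gzPatterns.1 hg
    obtain ⟨hinit, hs⟩ := isGZ_iff_initRows.1 hgz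
    exact mem_sigma.2 ⟨hs, mem_gzPatterns.2 ⟨hinit, rfl⟩⟩
  · rintro ⟨s, g⟩ hx
    obtain ⟨hs, hg⟩ := mem_sigma.1 hx
    obtain ⟨hgz, rfl : g (Fin.last n) = s⟩ := mem_gzPatterns.1 hg
    refine mem_gzPatterns.2 ⟨isGZ_iff_initRows.2 ?_, snocRow_last g p⟩
    rw [initRows_snocRow, snocRow_last]
    exact ⟨hgz, hs⟩
  · intro g hg
    obtain ⟨-, rfl⟩ := mem_gzPatterns.1 hg
    exact snocRow_initRows g
  · rintro ⟨s, g⟩ hx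
    obtain ⟨-, rfl : g (Fin.last n) = s⟩ := mem_gzPatterns.1 (mem_sigma.1 hx).2
    simp only [initRows_snocRow]
  · intro g hg
    obtain ⟨-, rfl⟩ := mem_gzPatterns.1 hg
    rw [snocRow_initRows]

end Patterns

section Weights

variable {K : Type*} [Field K] (q : K) {n : ℕ}

/-- The product `Δ(p) = ∏ᵢ (pᵢ - pᵢ₊₁)_q!`, the factor by which the Whittaker function is
normalized. -/
noncomputable def qfacGaps (p : Fin (n + 1) → ℤ) : K :=
  ∏ i : Fin n, qfac q (p i.castSucc - p i.succ)

/-- The kernel `Q(p, s) = ∏ᵢ 1 / ((pᵢ - sᵢ)_q! (sᵢ - pᵢ₊₁)_q!)` contributed to the weight of a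
Gelfand–Zetlin pattern by a row `p` together with the next shorter row `s`. -/
noncomputable def branchingKernel (p : Fin (n + 1) → ℤ) (s : Fin n → ℤ) : K :=
  (∏ i : Fin n, (qfac q (p i.castSucc - s i) * qfac q (s i - p i.succ)))⁻¹

theorem qbinom_sub_sub (a b c : ℤ) :
    qbinom q (a - c) (b - c) = qfac q (a - c) * (qfac q (a - b) * qfac q (b - c))⁻¹ := by
  rw [qbinom, sub_sub_sub_cancel_right, div_eq_mul_inv, mul_comm (qfac q (b - c))]

theorem qfacGaps_mul_branchingKernel (p : Fin (n + 1) → ℤ) (s : Fin n → ℤ) :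
    qfacGaps q p * branchingKernel q p s =
      ∏ k : Fin n, qbinom q (p k.castSucc - p k.succ) (s k - p k.succ) := by
  simp only [qfacGaps, branchingKernel, qbinom_sub_sub, prod_mul_distrib, prod_inv_distrib]

theorem gzWeight_eq_mul_gzWeight_initRows (z : Fin (n + 2) → K) (g : TriangularArray (n + 1)) :
    gzWeight q z g =
      z (Fin.last (n + 1)) ^ ((∑ i, g (Fin.last (n + 1)) i) - ∑ i, g.initRows (Fin.last n) i) *
        branchingKernel q (g (Fin.last (n + 1))) (g.initRows (Fin.last n)) *
        qfacGaps q (g.initRows (Fin.last n)) *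
        gzWeight q (fun i => z i.castSucc) g.initRows := by
  have regroup (a b c d A B C : K) :
      a * (b * A) * (c * C) * (d * B) = A * B * C * (a * b * c * d) := by ring
  unfold gzWeight
  rw [Fin.prod_univ_castSucc, Fin.prod_univ_castSucc, Fin.prod_univ_castSucc, mul_inv]
  -- Row indices such as `(Fin.last n).succ` and `Fin.last (n + 1)` agree only definitionally, which
  -- keeps `ring` from matching the factors.
  exact regroup _ _ _ _ _ _ _

theorem whit_eq_sum_gzPatterns (z : Fin (n + 1) → K) (p : Fin (n + 1) → ℤ) :
    whit q n z p = ∑ g ∈ gzPatterns p, gzWeight q z g := by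
  unfold whit
  split_ifs with hp
  · refine sum_congr ?_ fun _ _ => rfl
    ext g
    classical
    rw [mem_filter, mem_gzPatterns, and_iff_right_iff_imp]
    rintro ⟨hg, rfl⟩
    exact Finset.mem_Icc.2 hg.mem_Icc
  · refine (sum_eq_zero fun g hg => absurd ?_ hp).symm
    obtain ⟨hgz, rfl⟩ := mem_gzPatterns.1 hg
    exact Fin.antitone_iff_succ_le.1 (hgz.antitone (Fin.last n))

theorem nwhit_eq_qfacGaps_mul_whit (z : Fin (n + 1) → K) (p : Fin (n + 1) → ℤ) :
    nwhit q n z p = qfacGaps q p * whit q n z p :=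
  rfl

theorem whit_succ (z : Fin (n + 2) → K) (p : Fin (n + 2) → ℤ) :
    whit q (n + 1) z p =
      ∑ s ∈ Icc (fun i : Fin (n + 1) => p i.succ) (fun i => p i.castSucc),
        z (Fin.last (n + 1)) ^ ((∑ i, p i) - ∑ i, s i) * branchingKernel q p s *
          nwhit q n (fun i => z i.castSucc) s := by
  rw [whit_eq_sum_gzPatterns, sum_gzPatterns_succ]
  refine sum_congr rfl fun s _ => ?_
  rw [nwhit_eq_qfacGaps_mul_whit, whit_eq_sum_gzPatterns, ← mul_assoc, mul_sum]
  refine sum_congr rfl fun g hg => ?_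
  obtain ⟨-, rfl⟩ := mem_gzPatterns.1 hg
  rw [gzWeight_eq_mul_gzWeight_initRows, initRows_snocRow, snocRow_last]
  rfl

end Weights

/-- recursive relation for the normalized `q`-deformed Whittaker function
`Ψ̃` (here `ℓ = m + 1 ≥ 1`), with kernel given by a product of `q`-binomial coefficients
`C_q(p_k - p_{k+1}, s_k - p_{k+1})`. -/
theorem normalized_whittaker_recursion {K : Type*} [Field K] (q : K)
    (hq : ∀ n : ℕ, 1 ≤ n → q ^ n ≠ 1) (m : ℕ)
    (z : Fin (m + 2) → K) (hz : ∀ i, z i ≠ 0)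
    (p : Fin (m + 2) → ℤ) (hp : ∀ k : Fin (m + 1), p k.succ ≤ p k.castSucc) :
    nwhit q (m + 1) z p =
      ∑ s ∈ Finset.Icc (fun i : Fin (m + 1) => p i.succ) (fun i : Fin (m + 1) => p i.castSucc),
        z (Fin.last (m + 1)) ^ ((∑ i, p i) - ∑ i, s i) *
        (∏ k : Fin (m + 1), qbinom q (p k.castSucc - p k.succ) (s k - p k.succ)) *
        nwhit q m (fun i => z i.castSucc) s := by
  rw [nwhit_eq_qfacGaps_mul_whit, whit_succ, mul_sum]
  refine sum_congr rfl fun s _ => ?_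
  rw [← qfacGaps_mul_branchingKernel]
  ring
end

section
/- Conjugation identity between the dual Hamiltonian and the q-deformed Toda Hamiltonian: let Δ(λ) := ∏_{i=1}^{ℓ}(λ_i − λ_{i+1})_q!. For every strictly dominant λ ∈ ℤ^{ℓ+1} (λ_1 > λ_2 > … > λ_{ℓ+1}), every 1 ≤ r ≤ ℓ+1, and every function f : ℤ^{ℓ+1} → K, the following identity holds: Σ_{I ⊆ {1,…,ℓ+1}, |I| = r} ( ∏_{i ∈ I, i ≥ 2, i−1 ∉ I} (1 − q^{λ_{i−1} − λ_i}) ) · f(λ + e_I) = Σ_{J ⊆ {1,…,ℓ+1}, |J| = r} ( ∏_{j ∈ J, j ≤ ℓ, j+1 ∉ J} (1 − q^{λ_j − λ_{j+1} + 1}) ) · ( Δ(λ)/Δ(λ + e_J) ) · f(λ + e_J), where e_I := Σ_{i∈I} e_i and e_i is the i-th standard basis vector. (The left-hand side is the dual Hamiltonian Ĥ^∨_r obtained as the t→0 limit of the dual Macdonald operator, and the right-hand side is the Δ-conjugate of the q-deformed Toda Hamiltonian 𝓗_r in reversed, ρ-shifted variables.) -/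
open Finset

/-!
Both sides shift `f` by the same vectors `e_J`, so it suffices to compare the coefficients for each
`J`. They factor over the adjacent pairs `(i, i + 1)`, and for such a pair with gap
`d = λ_i - λ_{i+1}` only `[i ∈ J]` and `[i + 1 ∈ J]` matter. If these agree, the gap is unchanged
and all factors are `1`; if only `i ∈ J`, the gap grows to `d + 1` and `(d + 1)_q!` absorbs the Toda
factor `1 - q^(d+1)`; if only `i + 1 ∈ J`, the gap shrinks to `d - 1` and `(d)_q! / (d - 1)_q!` is
the dual factor `1 - q^d`.
-/

section QFactorial

variable {K : Type*} [Field K] {q : K}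

theorem qfac_ne_zero {n : ℤ} (hq : ∀ m : ℕ, 1 ≤ m → (m : ℤ) ≤ n → q ^ m ≠ 1) :
    qfac q n ≠ 0 := by
  refine prod_ne_zero_iff.mpr fun m hm => sub_ne_zero.mpr (hq (m + 1) ?_ ?_).symm
  · exact Nat.le_add_left 1 m
  · rw [mem_range] at hm
    omega

theorem qfac_add_one (q : K) {n : ℤ} (hn : 0 ≤ n) :
    qfac q (n + 1) = qfac q n * (1 - q ^ (n + 1)) := by
  lift n to ℕ using hn
  exact_mod_cast prod_range_succ (fun m => 1 - q ^ (m + 1)) n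

theorem qfac_div_qfac_sub_one {d : ℤ} (hd : 0 < d)
    (hq : ∀ m : ℕ, 1 ≤ m → (m : ℤ) ≤ d - 1 → q ^ m ≠ 1) :
    qfac q d / qfac q (d - 1) = 1 - q ^ d := by
  have hstep := qfac_add_one q (Int.le_sub_one_of_lt hd)
  rw [sub_add_cancel] at hstep
  rw [hstep, mul_div_cancel_left₀ _ (qfac_ne_zero hq)]

theorem one_sub_zpow_mul_qfac_div_qfac_add_one {d : ℤ} (hd : 0 ≤ d)
    (hq : ∀ m : ℕ, 1 ≤ m → (m : ℤ) ≤ d + 1 → q ^ m ≠ 1) :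
    (1 - q ^ (d + 1)) * (qfac q d / qfac q (d + 1)) = 1 := by
  rw [← mul_div_assoc, mul_comm, ← qfac_add_one q hd, div_self (qfac_ne_zero hq)]

theorem dual_factor_eq_toda_factor_mul_qfac_div {x y : ℤ} (hyx : y < x)
    (hq : ∀ m : ℕ, 1 ≤ m → (m : ℤ) ≤ x - y + 1 → q ^ m ≠ 1)
    (a b : Prop) [Decidable a] [Decidable b] :
    (if b then if a then 1 else 1 - q ^ (x - y) else 1) =
      (if a then if b then 1 else 1 - q ^ (x - y + 1) else 1) *
        (qfac q (x - y) /
          qfac q ((x + if a then 1 else 0) - (y + if b then 1 else 0))) := by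
  have hgap : 0 < x - y := sub_pos.mpr hyx
  have hne : qfac q (x - y) ≠ 0 := qfac_ne_zero fun m hm hle => hq m hm (by omega)
  by_cases ha : a <;> by_cases hb : b <;>
    simp only [ha, hb, if_true, if_false, add_zero, add_sub_add_right_eq_sub, div_self hne, one_mul]
  · rw [add_sub_right_comm, one_sub_zpow_mul_qfac_div_qfac_add_one hgap.le hq]
  · rw [← sub_sub, qfac_div_qfac_sub_one hgap fun m hm hle => hq m hm (by omega)]

end QFactorial

section AdjacentPairs

variable {M : Type*} [CommMonoid M] {n : ℕ}

theorem prod_mem_pred_eq_prod_castSucc_succ (J : Finset (Fin (n + 1)))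
    (g : Fin (n + 1) → Fin (n + 1) → M) :
    ∏ i ∈ J, (if _ : 0 < (i : ℕ) then
        g ⟨(i : ℕ) - 1, lt_of_le_of_lt (Nat.sub_le _ _) i.isLt⟩ i else 1) =
      ∏ i : Fin n, if i.succ ∈ J then g i.castSucc i.succ else 1 := by
  have h_first : ¬0 < ((0 : Fin (n + 1)) : ℕ) := lt_irrefl 0
  have h_succ (i : Fin n) : 0 < (i.succ : ℕ) := i.succ_pos
  rw [← Fintype.prod_ite_mem, Fin.prod_univ_succ, dif_neg h_first, ite_self, one_mul]
  exact prod_congr rfl fun i _ => by rw [dif_pos (h_succ i)]; rfl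

theorem prod_mem_succ_eq_prod_castSucc_succ (J : Finset (Fin (n + 1)))
    (g : Fin (n + 1) → Fin (n + 1) → M) :
    ∏ j ∈ J, (if h : (j : ℕ) + 1 < n + 1 then g j ⟨(j : ℕ) + 1, h⟩ else 1) =
      ∏ i : Fin n, if i.castSucc ∈ J then g i.castSucc i.succ else 1 := by
  have h_last : ¬(Fin.last n : ℕ) + 1 < n + 1 := lt_irrefl (n + 1)
  have h_castSucc (i : Fin n) : (i.castSucc : ℕ) + 1 < n + 1 := Nat.succ_lt_succ i.isLt
  rw [← Fintype.prod_ite_mem, Fin.prod_univ_castSucc, dif_neg h_last, ite_self, mul_one]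
  exact prod_congr rfl fun i _ => by rw [dif_pos (h_castSucc i)]; rfl

end AdjacentPairs

section Hamiltonians

variable {K : Type*} [Field K] {ℓ : ℕ}

/-- The vector `e_J = ∑_{j ∈ J} e_j`. -/
def indicatorVec (J : Finset (Fin (ℓ + 1))) : Fin (ℓ + 1) → ℤ :=
  fun j => if j ∈ J then 1 else 0

/-- The function `Δ(λ) = ∏ (λ_i - λ_{i+1})_q!` that conjugates the Toda Hamiltonians into the dual
ones. -/
noncomputable def gapQFac (q : K) (lam : Fin (ℓ + 1) → ℤ) : K :=
  ∏ i : Fin ℓ, qfac q (lam i.castSucc - lam i.succ)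

/-- The coefficient of `f (λ + e_I)` in the dual Hamiltonian, indexed by the adjacent pairs
`(i.castSucc, i.succ)` instead of by the elements of `I`. -/
noncomputable def dualCoeff (q : K) (lam : Fin (ℓ + 1) → ℤ) (I : Finset (Fin (ℓ + 1))) : K :=
  ∏ i : Fin ℓ, if i.succ ∈ I then
    if i.castSucc ∈ I then 1 else 1 - q ^ (lam i.castSucc - lam i.succ)
  else 1

/-- The coefficient of `f (λ + e_J)` in the `q`-deformed Toda Hamiltonian before conjugation by
`gapQFac`, indexed by adjacent pairs like `dualCoeff`. -/
noncomputable def todaCoeff (q : K) (lam : Fin (ℓ + 1) → ℤ) (J : Finset (Fin (ℓ + 1))) : K :=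
  ∏ i : Fin ℓ, if i.castSucc ∈ J then
    if i.succ ∈ J then 1 else 1 - q ^ (lam i.castSucc - lam i.succ + 1)
  else 1

theorem dualCoeff_eq_prod_mem (q : K) (lam : Fin (ℓ + 1) → ℤ) (I : Finset (Fin (ℓ + 1))) :
    dualCoeff q lam I = ∏ i ∈ I, (if _ : 0 < (i : ℕ) then
      (if (⟨(i : ℕ) - 1, lt_of_le_of_lt (Nat.sub_le _ _) i.isLt⟩ : Fin (ℓ + 1)) ∈ I then 1
        else 1 - q ^ (lam ⟨(i : ℕ) - 1, lt_of_le_of_lt (Nat.sub_le _ _) i.isLt⟩ - lam i))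
      else 1) :=
  (prod_mem_pred_eq_prod_castSucc_succ I
    fun k i => if k ∈ I then 1 else 1 - q ^ (lam k - lam i)).symm

theorem todaCoeff_eq_prod_mem (q : K) (lam : Fin (ℓ + 1) → ℤ) (J : Finset (Fin (ℓ + 1))) :
    todaCoeff q lam J = ∏ j ∈ J, (if h : (j : ℕ) + 1 < ℓ + 1 then
      (if (⟨(j : ℕ) + 1, h⟩ : Fin (ℓ + 1)) ∈ J then 1
        else 1 - q ^ (lam j - lam ⟨(j : ℕ) + 1, h⟩ + 1)) else 1) :=
  (prod_mem_succ_eq_prod_castSucc_succ J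
    fun j k => if k ∈ J then 1 else 1 - q ^ (lam j - lam k + 1)).symm

theorem dualCoeff_eq_todaCoeff_mul_gapQFac_div {q : K} {lam : Fin (ℓ + 1) → ℤ}
    (hlam : ∀ i : Fin ℓ, lam i.succ < lam i.castSucc)
    (hq : ∀ (i : Fin ℓ) (m : ℕ), 1 ≤ m → (m : ℤ) ≤ lam i.castSucc - lam i.succ + 1 → q ^ m ≠ 1)
    (J : Finset (Fin (ℓ + 1))) :
    dualCoeff q lam J =
      todaCoeff q lam J * (gapQFac q lam / gapQFac q (lam + indicatorVec J)) := by
  simp only [dualCoeff, todaCoeff, gapQFac, ← prod_div_distrib, ← prod_mul_distrib]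
  exact prod_congr rfl fun i _ => dual_factor_eq_toda_factor_mul_qfac_div (hlam i) (hq i) _ _

theorem dual_hamiltonian_conjugation_general {q : K} {lam : Fin (ℓ + 1) → ℤ}
    (hlam : ∀ i : Fin ℓ, lam i.succ < lam i.castSucc)
    (hq : ∀ (i : Fin ℓ) (m : ℕ), 1 ≤ m → (m : ℤ) ≤ lam i.castSucc - lam i.succ + 1 → q ^ m ≠ 1)
    (r : ℕ) (f : (Fin (ℓ + 1) → ℤ) → K) :
    ∑ I ∈ powersetCard r univ, dualCoeff q lam I * f (lam + indicatorVec I) =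
      ∑ J ∈ powersetCard r univ,
        todaCoeff q lam J * (gapQFac q lam / gapQFac q (lam + indicatorVec J)) *
          f (lam + indicatorVec J) :=
  sum_congr rfl fun J _ => by rw [← dualCoeff_eq_todaCoeff_mul_gapQFac_div hlam hq]

end Hamiltonians

/-- conjugation identity between the dual Hamiltonian `Ĥ^∨_r` (left-hand
side) and the `Δ`-conjugate of the `q`-deformed Toda Hamiltonian `𝓗_r` in reversed,
`ρ`-shifted variables (right-hand side), where `Δ(λ) = ∏_{i=1}^{ℓ}(λ_i - λ_{i+1})_q!`. -/
theorem dual_hamiltonian_conjugation {K : Type*} [Field K] (q : K)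
    (hq : ∀ n : ℕ, 1 ≤ n → q ^ n ≠ 1) (ℓ : ℕ) (hℓ : 1 ≤ ℓ)
    (lam : Fin (ℓ + 1) → ℤ) (hlam : ∀ i : Fin ℓ, lam i.succ < lam i.castSucc)
    (r : ℕ) (hr1 : 1 ≤ r) (hr2 : r ≤ ℓ + 1)
    (f : (Fin (ℓ + 1) → ℤ) → K) :
    ∑ I ∈ Finset.powersetCard r (Finset.univ : Finset (Fin (ℓ + 1))),
      (∏ i ∈ I, (if h : 0 < (i : ℕ) then
          (if (⟨(i : ℕ) - 1, lt_of_le_of_lt (Nat.sub_le _ _) i.isLt⟩ : Fin (ℓ + 1)) ∈ I then 1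
           else 1 - q ^ (lam ⟨(i : ℕ) - 1, lt_of_le_of_lt (Nat.sub_le _ _) i.isLt⟩ - lam i))
         else 1)) *
        f (fun j => lam j + if j ∈ I then 1 else 0)
    = ∑ J ∈ Finset.powersetCard r (Finset.univ : Finset (Fin (ℓ + 1))),
        (∏ j ∈ J, (if h : (j : ℕ) + 1 < ℓ + 1 then
            (if (⟨(j : ℕ) + 1, h⟩ : Fin (ℓ + 1)) ∈ J then 1
             else 1 - q ^ (lam j - lam ⟨(j : ℕ) + 1, h⟩ + 1)) else 1)) *
        ((∏ i : Fin ℓ, qfac q (lam i.castSucc - lam i.succ)) /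
          (∏ i : Fin ℓ, qfac q ((lam i.castSucc + if i.castSucc ∈ J then 1 else 0) -
            (lam i.succ + if i.succ ∈ J then 1 else 0)))) *
        f (fun j => lam j + if j ∈ J then 1 else 0) := by
  simp only [← dualCoeff_eq_prod_mem, ← todaCoeff_eq_prod_mem]
  exact dual_hamiltonian_conjugation_general hlam (fun _ m hm _ => hq m hm) r f
end

section
/- The q-deformed gl_2-Whittaker function, defined by Ψ_{z_1,z_2}(p_1, p_2) := Σ_{p_2 ≤ p ≤ p_1} z_1^{p} z_2^{p_1+p_2−p} / ( (p_1−p)_q! (p−p_2)_q! ) for p_1 ≥ p_2 and Ψ_{z_1,z_2}(p_1, p_2) := 0 for p_1 < p_2, is a common eigenfunction of the two commuting q-deformed gl_2-Toda Hamiltonians: for all (p_1, p_2) ∈ ℤ², (1 − q^{p_1−p_2+1}) Ψ_{z_1,z_2}(p_1+1, p_2) + Ψ_{z_1,z_2}(p_1, p_2+1) = (z_1 + z_2) Ψ_{z_1,z_2}(p_1, p_2), and Ψ_{z_1,z_2}(p_1+1, p_2+1) = z_1 z_2 Ψ_{z_1,z_2}(p_1, p_2). -/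
open Finset

/-- The `q`-deformed `gl_2`-Whittaker function
`Ψ_{z₁,z₂}(p₁,p₂) = Σ_{p₂ ≤ p ≤ p₁} z₁^p z₂^{p₁+p₂-p}/((p₁-p)_q!(p-p₂)_q!)` for
`p₁ ≥ p₂`, and `0` for `p₁ < p₂`. -/
noncomputable def whitGL2 {K : Type*} [Field K] (q z₁ z₂ : K) (p₁ p₂ : ℤ) : K :=
  if p₂ ≤ p₁ then
    ∑ p ∈ Finset.Icc p₂ p₁,
      z₁ ^ p * z₂ ^ (p₁ + p₂ - p) / (qfac q (p₁ - p) * qfac q (p - p₂))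
  else 0

/-!
Write `r n = 1 / (n)_q!`, with `r n = 0` for `n < 0`. Then
`Ψ(p₁, p₂) = ∑ z₁ ^ p * z₂ ^ (p₁ + p₂ - p) * r (p₁ - p) * r (p - p₂)` over all `p : ℤ`, so both
eigenvalue equations can be compared summand by summand once the summation index of `z₁ * Ψ` is
shifted by one. For `𝓗₂` the summands agree. For `𝓗₁`, the recurrence
`r (n - 1) = (1 - q ^ n) * r n` reduces them, with `A = q ^ (p₁ + 1 - p)` and `B = q ^ (p - p₂)`, to
`(1 - A * B) + (1 - A) * (1 - B) = (1 - A) + (1 - B)`.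
-/

section InvQfac

variable {K : Type*} [Field K] (q : K)

/-- The reciprocal `q`-factorial `1 / (n)_q!`, extended by zero to negative `n` (where `qfac` takes
the value `1`), so that the sum defining `whitGL2` can be taken over all of `ℤ`. -/
noncomputable def invQfac (n : ℤ) : K :=
  if 0 ≤ n then (qfac q n)⁻¹ else 0

theorem invQfac_of_nonneg {n : ℤ} (hn : 0 ≤ n) : invQfac q n = (qfac q n)⁻¹ :=
  if_pos hn

theorem invQfac_of_neg {n : ℤ} (hn : n < 0) : invQfac q n = 0 :=
  if_neg hn.not_ge

theorem qfac_natCast_add_one (n : ℕ) : qfac q (n + 1) = qfac q n * (1 - q ^ (n + 1)) :=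
  prod_range_succ (fun m => 1 - q ^ (m + 1)) n

variable {q}

theorem invQfac_natCast_sub_one {n : ℕ} (hn : 1 ≤ n → q ^ n ≠ 1) :
    invQfac q (n - 1) = (1 - q ^ n) * invQfac q n := by
  cases n with
  | zero => simp [invQfac_of_neg]
  | succ k =>
    have hk : 1 - q ^ (k + 1) ≠ 0 := sub_ne_zero.2 (hn k.succ_pos).symm
    rw [Nat.cast_succ, add_sub_cancel_right, invQfac_of_nonneg q k.cast_nonneg,
      invQfac_of_nonneg q (by positivity), qfac_natCast_add_one, mul_inv_rev,
      mul_inv_cancel_left₀ hk]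

theorem invQfac_mul_invQfac_recurrence {a b : ℤ}
    (hq : ∀ n : ℕ, 1 ≤ n → (n : ℤ) ≤ a + b → q ^ n ≠ 1) :
    (1 - q ^ (a + b)) * (invQfac q a * invQfac q b) + invQfac q (a - 1) * invQfac q (b - 1) =
      invQfac q a * invQfac q (b - 1) + invQfac q (a - 1) * invQfac q b := by
  rcases lt_or_ge a 0 with ha | ha
  · simp [invQfac_of_neg q ha, invQfac_of_neg q (show a - 1 < 0 by lia)]
  rcases lt_or_ge b 0 with hb | hb
  · simp [invQfac_of_neg q hb, invQfac_of_neg q (show b - 1 < 0 by lia)]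
  lift a to ℕ using ha
  lift b to ℕ using hb
  rw [invQfac_natCast_sub_one fun h => hq a h (by lia),
    invQfac_natCast_sub_one fun h => hq b h (by lia), ← Nat.cast_add, zpow_natCast, pow_add]
  ring

end InvQfac

section Whittaker

variable {K : Type*} [Field K] (q z₁ z₂ : K)

/-- The `p`-th summand of the `q`-deformed `gl_2`-Whittaker function `Ψ_{z₁,z₂}(p₁,p₂)`, for any
integer `p`. Using `invQfac` makes it vanish unless `p₂ ≤ p ≤ p₁`. -/
noncomputable def whitGL2Summand (p₁ p₂ p : ℤ) : K :=
  z₁ ^ p * z₂ ^ (p₁ + p₂ - p) * (invQfac q (p₁ - p) * invQfac q (p - p₂))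

theorem support_whitGL2Summand_subset (p₁ p₂ : ℤ) :
    Function.support (whitGL2Summand q z₁ z₂ p₁ p₂) ⊆ Icc p₂ p₁ := by
  intro p hp
  by_contra h
  apply hp
  rw [mem_coe, mem_Icc, not_and_or, not_le, not_le] at h
  rcases h with h | h
  · simp [whitGL2Summand, invQfac_of_neg q (sub_neg.2 h)]
  · simp [whitGL2Summand, invQfac_of_neg q (sub_neg.2 h)]

theorem hasFiniteSupport_whitGL2Summand (p₁ p₂ : ℤ) :
    (whitGL2Summand q z₁ z₂ p₁ p₂).HasFiniteSupport :=
  (finite_toSet _).subset (support_whitGL2Summand_subset q z₁ z₂ p₁ p₂)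

theorem whitGL2_eq_finsum (p₁ p₂ : ℤ) :
    whitGL2 q z₁ z₂ p₁ p₂ = ∑ᶠ p, whitGL2Summand q z₁ z₂ p₁ p₂ p := by
  rw [finsum_eq_sum_of_support_subset _ (support_whitGL2Summand_subset q z₁ z₂ p₁ p₂), whitGL2]
  split_ifs with h
  · refine sum_congr rfl fun p hp => ?_
    obtain ⟨h₂, h₁⟩ := mem_Icc.1 hp
    rw [whitGL2Summand, invQfac_of_nonneg q (sub_nonneg.2 h₁),
      invQfac_of_nonneg q (sub_nonneg.2 h₂), div_eq_mul_inv, mul_inv]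
  · rw [Icc_eq_empty h, sum_empty]

theorem whitGL2_eq_finsum_sub_one (p₁ p₂ : ℤ) :
    whitGL2 q z₁ z₂ p₁ p₂ = ∑ᶠ p, whitGL2Summand q z₁ z₂ p₁ p₂ (p - 1) := by
  rw [whitGL2_eq_finsum]
  exact (finsum_comp_equiv (Equiv.subRight 1)).symm

variable {q z₁ z₂}

theorem mul_whitGL2Summand_sub_one (hz₁ : z₁ ≠ 0) (p₁ p₂ p : ℤ) :
    z₁ * whitGL2Summand q z₁ z₂ p₁ p₂ (p - 1) =
      z₁ ^ p * z₂ ^ (p₁ + p₂ + 1 - p) *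
        (invQfac q (p₁ + 1 - p) * invQfac q (p - p₂ - 1)) := by
  rw [whitGL2Summand, ← mul_assoc z₁, ← mul_assoc z₁, ← zpow_one_add₀ hz₁, add_sub_cancel,
    show p₁ + p₂ - (p - 1) = p₁ + p₂ + 1 - p by ring, show p₁ - (p - 1) = p₁ + 1 - p by ring,
    sub_right_comm]

theorem whitGL2Summand_add_one_add_one (hz₁ : z₁ ≠ 0) (hz₂ : z₂ ≠ 0) (p₁ p₂ p : ℤ) :
    whitGL2Summand q z₁ z₂ (p₁ + 1) (p₂ + 1) p =
      z₁ * z₂ * whitGL2Summand q z₁ z₂ p₁ p₂ (p - 1) := by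
  rw [mul_right_comm, mul_whitGL2Summand_sub_one hz₁, whitGL2Summand,
    show p₁ + 1 + (p₂ + 1) - p = p₁ + p₂ + 1 - p + 1 by ring, zpow_add_one₀ hz₂, ← sub_sub]
  ring

theorem whitGL2_add_one_add_one (hz₁ : z₁ ≠ 0) (hz₂ : z₂ ≠ 0) (p₁ p₂ : ℤ) :
    whitGL2 q z₁ z₂ (p₁ + 1) (p₂ + 1) = z₁ * z₂ * whitGL2 q z₁ z₂ p₁ p₂ := by
  rw [whitGL2_eq_finsum, whitGL2_eq_finsum_sub_one, mul_finsum]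
  exact finsum_congr (whitGL2Summand_add_one_add_one hz₁ hz₂ p₁ p₂)

theorem whitGL2Summand_recurrence (hz₁ : z₁ ≠ 0) (hz₂ : z₂ ≠ 0) {p₁ p₂ : ℤ}
    (hq : ∀ n : ℕ, 1 ≤ n → (n : ℤ) ≤ p₁ - p₂ + 1 → q ^ n ≠ 1) (p : ℤ) :
    (1 - q ^ (p₁ - p₂ + 1)) * whitGL2Summand q z₁ z₂ (p₁ + 1) p₂ p +
        whitGL2Summand q z₁ z₂ p₁ (p₂ + 1) p =
      z₁ * whitGL2Summand q z₁ z₂ p₁ p₂ (p - 1) + z₂ * whitGL2Summand q z₁ z₂ p₁ p₂ p := by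
  have hsum : p₁ - p₂ + 1 = (p₁ + 1 - p) + (p - p₂) := by ring
  have hpow : z₂ ^ (p₁ + p₂ + 1 - p) = z₂ ^ (p₁ + p₂ - p) * z₂ := by
    rw [add_sub_right_comm, zpow_add_one₀ hz₂]
  rw [hsum] at hq ⊢
  rw [mul_whitGL2Summand_sub_one hz₁]
  simp only [whitGL2Summand]
  rw [add_right_comm p₁ 1 p₂, ← add_assoc p₁ p₂ 1, hpow, ← sub_sub p p₂ 1,
    show p₁ - p = p₁ + 1 - p - 1 by ring]
  linear_combination (z₁ ^ p * (z₂ ^ (p₁ + p₂ - p) * z₂)) * invQfac_mul_invQfac_recurrence hq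

theorem whitGL2_recurrence (hz₁ : z₁ ≠ 0) (hz₂ : z₂ ≠ 0) {p₁ p₂ : ℤ}
    (hq : ∀ n : ℕ, 1 ≤ n → (n : ℤ) ≤ p₁ - p₂ + 1 → q ^ n ≠ 1) :
    (1 - q ^ (p₁ - p₂ + 1)) * whitGL2 q z₁ z₂ (p₁ + 1) p₂ + whitGL2 q z₁ z₂ p₁ (p₂ + 1) =
      (z₁ + z₂) * whitGL2 q z₁ z₂ p₁ p₂ := by
  have hfin (p₁ p₂ : ℤ) := hasFiniteSupport_whitGL2Summand q z₁ z₂ p₁ p₂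
  have hfin_mul (c : K) (p₁ p₂ : ℤ) :
      (fun p => c * whitGL2Summand q z₁ z₂ p₁ p₂ p).HasFiniteSupport :=
    (hfin p₁ p₂).mul_right _
  have hfin_shift : (fun p => z₁ * whitGL2Summand q z₁ z₂ p₁ p₂ (p - 1)).HasFiniteSupport :=
    ((hfin p₁ p₂).comp_of_injective sub_left_injective).mul_right _
  calc
    _ = ∑ᶠ p, ((1 - q ^ (p₁ - p₂ + 1)) * whitGL2Summand q z₁ z₂ (p₁ + 1) p₂ p +
          whitGL2Summand q z₁ z₂ p₁ (p₂ + 1) p) := by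
      rw [finsum_add_distrib (hfin_mul _ _ _) (hfin _ _), ← mul_finsum, ← whitGL2_eq_finsum,
        ← whitGL2_eq_finsum]
    _ = ∑ᶠ p, (z₁ * whitGL2Summand q z₁ z₂ p₁ p₂ (p - 1) +
          z₂ * whitGL2Summand q z₁ z₂ p₁ p₂ p) :=
      finsum_congr (whitGL2Summand_recurrence hz₁ hz₂ hq)
    _ = (z₁ + z₂) * whitGL2 q z₁ z₂ p₁ p₂ := by
      rw [finsum_add_distrib hfin_shift (hfin_mul _ _ _), ← mul_finsum, ← mul_finsum,
        ← whitGL2_eq_finsum_sub_one, ← whitGL2_eq_finsum, add_mul]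

end Whittaker

theorem gl2_toda_eigenfunction_general {K : Type*} [Field K] (q z₁ z₂ : K) (hz₁ : z₁ ≠ 0)
    (hz₂ : z₂ ≠ 0) (p₁ p₂ : ℤ) (hq : ∀ n : ℕ, 1 ≤ n → (n : ℤ) ≤ p₁ - p₂ + 1 → q ^ n ≠ 1) :
    (1 - q ^ (p₁ - p₂ + 1)) * whitGL2 q z₁ z₂ (p₁ + 1) p₂ + whitGL2 q z₁ z₂ p₁ (p₂ + 1)
      = (z₁ + z₂) * whitGL2 q z₁ z₂ p₁ p₂ ∧
    whitGL2 q z₁ z₂ (p₁ + 1) (p₂ + 1) = z₁ * z₂ * whitGL2 q z₁ z₂ p₁ p₂ :=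
  ⟨whitGL2_recurrence hz₁ hz₂ hq, whitGL2_add_one_add_one hz₁ hz₂ p₁ p₂⟩

/-- the `q`-deformed `gl_2`-Whittaker function is a common eigenfunction of
the two commuting `q`-deformed `gl_2`-Toda Hamiltonians
`𝓗₁ = (1 - q^{p₁-p₂+1}) T₁ + T₂` and `𝓗₂ = T₁ T₂`. -/
theorem gl2_toda_eigenfunction {K : Type*} [Field K] (q : K)
    (hq : ∀ n : ℕ, 1 ≤ n → q ^ n ≠ 1) (z₁ z₂ : K) (hz₁ : z₁ ≠ 0) (hz₂ : z₂ ≠ 0)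
    (p₁ p₂ : ℤ) :
    (1 - q ^ (p₁ - p₂ + 1)) * whitGL2 q z₁ z₂ (p₁ + 1) p₂ + whitGL2 q z₁ z₂ p₁ (p₂ + 1)
      = (z₁ + z₂) * whitGL2 q z₁ z₂ p₁ p₂ ∧
    whitGL2 q z₁ z₂ (p₁ + 1) (p₂ + 1) = z₁ * z₂ * whitGL2 q z₁ z₂ p₁ p₂ :=
  gl2_toda_eigenfunction_general q z₁ z₂ hz₁ hz₂ p₁ p₂ fun n hn _ => hq n hn
end
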